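/- The series Σ_{k=0}^∞ (−1/1024)^k · ((1/2)_k)^5 / ((1)_k)^5 · (820k² + 180k + 13) converges and equals 128/π². -/

import Mathlib

/-!
The proof is by the Wilf–Zeilberger method. With
`H(n,k) = (-1)^n (1/2)_{n+k}^4 (1/2)_n^6 / ((2n+k)!^4 (2n)!)`, the hypergeometric part of the summand
of a well-poised series of Dougall type after the parameter shift `a ↦ a + 3n`,
`b, c, d, e ↦ b + n, c + n, d + n, e + n`, the functions
`F(n,k) = 128 n (1 + 6n + 4k) H(n,k)` and `G(n,k) = H(n,k) P(n,k) / (2n+k+1)^4`, for the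
polynomial `P` below, satisfy `F(n+1,k) - F(n,k) = G(n,k+1) - G(n,k)` (`wz`). Moreover `F(0,k) = 0`,
and `G(n,0)` is the `n`-th term of the series (`wzG_zero_right`). Summing over the square
`n, k < N` gives
`∑_{n<N} G(n,0) = G(0,N) + ∑_{1≤n<N} G(n,N) - ∑_{k<N} F(N,k)`.

The two sums on the right are `O(1/N)` and `O(N/256^N)` by `abs_wzH_le`, which combines
the geometric decay `|H(n,0)| ≤ 1024^{-n}` with `∏_{j<k} (n+1/2+j)/(2n+1+j) ≤ 1/(k+1)` for `n ≥ 1`.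
The remaining term `G(0,N)` behaves like `128 N^2 ((1/2)_N / N!)^4`, and Euler's limit for
`Γ(1/2) = √π` shows that it tends to `128/π^2`.
-/

/-- The Pochhammer symbol `(x)_k = x (x+1) ⋯ (x+k-1) = Γ(x+k)/Γ(x)`. -/
noncomputable def poch (x : ℝ) (k : ℕ) : ℝ := ∏ i ∈ Finset.range k, (x + i)

open Filter Topology Finset

lemma poch_succ (x : ℝ) (k : ℕ) : poch x (k + 1) = poch x k * (x + k) := by
  simp [poch, prod_range_succ]

lemma poch_half_pos (k : ℕ) : 0 < poch (1/2) k := by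
  unfold poch
  exact prod_pos fun i _ => by positivity

lemma poch_one (k : ℕ) : poch 1 k = (k.factorial : ℝ) := by
  induction k with
  | zero => simp [poch]
  | succ k ih => rw [poch_succ, ih, Nat.factorial_succ]; push_cast; ring

/-- The hypergeometric kernel shared by both members of the WZ pair. -/
noncomputable def wzH (n k : ℕ) : ℝ :=
  (-1) ^ n * poch (1/2) (n + k) ^ 4 * poch (1/2) n ^ 6 /
    (((2 * n + k).factorial : ℝ) ^ 4 * ((2 * n).factorial : ℝ))

/-- The polynomial in the numerator of the WZ certificate. -/
noncomputable def wzP (n k : ℝ) : ℝ :=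
  13 + 124 * k + 480 * k ^ 2 + 960 * k ^ 3 + 1040 * k ^ 4 + 576 * k ^ 5 + 128 * k ^ 6 +
  284 * n + 2264 * n * k + 6656 * n * k ^ 2 + 9344 * n * k ^ 3 + 6336 * n * k ^ 4 + 1664 * n * k ^ 5 +
  2572 * n ^ 2 + 15200 * n ^ 2 * k + 31488 * n ^ 2 * k ^ 2 + 27904 * n ^ 2 * k ^ 3 + 9024 * n ^ 2 * k ^ 4 +
  11296 * n ^ 3 + 46784 * n ^ 3 * k + 61440 * n ^ 3 * k ^ 2 + 26112 * n ^ 3 * k ^ 3 +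
  25648 * n ^ 4 + 67264 * n ^ 4 * k + 42496 * n ^ 4 * k ^ 2 +
  29120 * n ^ 5 + 36736 * n ^ 5 * k +
  13120 * n ^ 6

/-- The first member of the WZ pair; it vanishes at `n = 0`. -/
noncomputable def wzF (n k : ℕ) : ℝ := 128 * n * (1 + 6 * n + 4 * k) * wzH n k

/-- The second member of the WZ pair; at `k = 0` it is the summand of the series. -/
noncomputable def wzG (n k : ℕ) : ℝ := wzH n k * wzP n k / (2 * n + k + 1) ^ 4

lemma wzH_succ_right (n k : ℕ) :
    wzH n (k + 1) = wzH n k * ((n + k + 1/2) ^ 4 / (2 * n + k + 1) ^ 4) := by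
  unfold wzH
  rw [← add_assoc, ← add_assoc, poch_succ, Nat.factorial_succ]
  have h1 : ((2 * n + k).factorial : ℝ) ≠ 0 := by positivity
  have h2 : ((2 * n).factorial : ℝ) ≠ 0 := by positivity
  push_cast
  field_simp
  ring

lemma wzH_succ_left (n k : ℕ) :
    wzH (n + 1) k = wzH n k * (-((n + k + 1/2) ^ 4 * (n + 1/2) ^ 6) /
      ((2 * n + k + 1) ^ 4 * (2 * n + k + 2) ^ 4 * ((2 * n + 1) * (2 * n + 2)))) := by
  unfold wzH
  rw [show n + 1 + k = (n + k) + 1 by ring, show 2 * (n + 1) + k = (2 * n + k) + 1 + 1 by ring,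
    show 2 * (n + 1) = 2 * n + 1 + 1 by ring, poch_succ, poch_succ,
    Nat.factorial_succ, Nat.factorial_succ, Nat.factorial_succ, Nat.factorial_succ, pow_succ]
  have h1 : ((2 * n + k).factorial : ℝ) ≠ 0 := by positivity
  have h2 : ((2 * n).factorial : ℝ) ≠ 0 := by positivity
  have h3 : (2 * n + k + 2 : ℝ) ≠ 0 := by positivity
  push_cast
  rw [show (2 * n + k + 1 + 1 : ℝ) = 2 * n + k + 2 by ring,
    show (2 * n + 1 + 1 : ℝ) = 2 * n + 2 by ring]
  field_simp
  ring

lemma wz (n k : ℕ) : wzF (n + 1) k - wzF n k = wzG n (k + 1) - wzG n k := by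
  unfold wzF wzG
  rw [wzH_succ_left, wzH_succ_right]
  generalize wzH n k = X
  have h1 : (2 * n + k + 1 : ℝ) ≠ 0 := by positivity
  have h2 : (2 * n + k + 2 : ℝ) ≠ 0 := by positivity
  have h3 : (2 * n + 1 : ℝ) ≠ 0 := by positivity
  have h4 : (n + 1 : ℝ) ≠ 0 := by positivity
  push_cast
  rw [show (2 * n + (k + 1) + 1 : ℝ) = 2 * n + k + 2 by ring,
    show (2 * n + 2 : ℝ) = 2 * (n + 1) by ring, show (n + 1/2 : ℝ) = (2 * n + 1) / 2 by ring]
  unfold wzP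
  field_simp
  ring

lemma wz_sum (N K : ℕ) :
    ∑ n ∈ range N, wzG n 0 = ∑ n ∈ range N, wzG n K - ∑ k ∈ range K, wzF N k := by
  have h : ∑ n ∈ range N, ∑ k ∈ range K, (wzF (n + 1) k - wzF n k)
      = ∑ n ∈ range N, ∑ k ∈ range K, (wzG n (k + 1) - wzG n k) := by
    simp only [wz]
  rw [sum_comm] at h
  simp only [fun k => sum_range_sub (fun n => wzF n k) N,
    fun n => sum_range_sub (fun k => wzG n k) K] at h
  simp only [sum_sub_distrib] at h
  have h0 : ∑ k ∈ range K, wzF 0 k = 0 := by simp [wzF]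
  linarith

/-- `(2n)! = 4^n (1/2)_n n!`. -/
lemma factorial_two_mul_eq (n : ℕ) :
    ((2 * n).factorial : ℝ) = 4 ^ n * poch (1/2) n * poch 1 n := by
  induction n with
  | zero => simp [poch]
  | succ n ih =>
    rw [show 2 * (n + 1) = 2 * n + 1 + 1 by ring, Nat.factorial_succ, Nat.factorial_succ,
      poch_succ, poch_succ]
    push_cast
    rw [ih]
    ring

lemma wzG_zero_right (n : ℕ) :
    wzG n 0 = (-1/1024 : ℝ) ^ n * (poch (1/2) n) ^ 5 / (poch 1 n) ^ 5 *
          (820 * (n : ℝ) ^ 2 + 180 * n + 13) := by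
  have hP : wzP n (0 : ℕ) = (2 * n + (0 : ℕ) + 1) ^ 4 * (820 * (n : ℝ) ^ 2 + 180 * n + 13) := by
    unfold wzP; push_cast; ring
  have h1 : (2 * n + (0 : ℕ) + 1 : ℝ) ≠ 0 := by positivity
  have h2 : poch (1/2) n ≠ 0 := (poch_half_pos n).ne'
  have h3 : poch 1 n ≠ 0 := by rw [poch_one]; positivity
  unfold wzG wzH
  have h4 : (-1/1024 : ℝ) ^ n = (-1) ^ n / (4 ^ n) ^ 5 := by
    rw [← pow_mul, mul_comm n 5, pow_mul, ← div_pow]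
    norm_num
  rw [hP, add_zero, add_zero, factorial_two_mul_eq, h4]
  field_simp

/-- `H(n,0) = (-1)^n ((1/2)_n^2 / (2n)!)^5`, and the base is multiplied by at most `1/4` per step. -/
lemma abs_wzH_zero_le (n : ℕ) : |wzH n 0| ≤ (1/1024) ^ n := by
  induction n with
  | zero => simp [wzH, poch]
  | succ n ih =>
    rw [wzH_succ_left, abs_mul, pow_succ (1/1024 : ℝ) n]
    refine mul_le_mul ih ?_ (abs_nonneg _) (by positivity)
    rw [Nat.cast_zero, add_zero, add_zero, neg_div, abs_neg, abs_of_nonneg (by positivity),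
      div_le_div_iff₀ (by positivity) (by positivity), ← sub_nonneg]
    ring_nf
    positivity

lemma abs_wzH_le (n k : ℕ) (hn : 1 ≤ n) : |wzH n k| ≤ (1/1024) ^ n / (k + 1) ^ 4 := by
  induction k with
  | zero => simpa using abs_wzH_zero_le n
  | succ k ih =>
    rw [wzH_succ_right, abs_mul]
    have h2 : |((n + k + 1/2 : ℝ) ^ 4 / (2 * n + k + 1 : ℝ) ^ 4)| ≤ ((k : ℝ) + 1) ^ 4 / (k + 2) ^ 4 := by
      rw [abs_of_nonneg (by positivity), ← div_pow, ← div_pow]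
      gcongr ?_ ^ 4
      rw [div_le_div_iff₀ (by positivity) (by positivity)]
      have : (1 : ℝ) ≤ n := by exact_mod_cast hn
      nlinarith [mul_nonneg (sub_nonneg.2 this) (Nat.cast_nonneg (α := ℝ) k)]
    calc _ ≤ (1/1024) ^ n / ((k : ℝ) + 1) ^ 4 * ((k + 1) ^ 4 / (k + 2) ^ 4) :=
          mul_le_mul ih h2 (abs_nonneg _) (by positivity)
      _ = _ := by
          push_cast
          rw [show (k + 1 + 1 : ℝ) = k + 2 by ring]
          field_simp

lemma abs_wzP_le (n k : ℕ) : |wzP n k| ≤ 256 * (2 * n + k + 1) ^ 6 := by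
  have h0 : 0 ≤ wzP n k := by unfold wzP; positivity
  rw [abs_of_nonneg h0, ← sub_nonneg]
  unfold wzP
  ring_nf
  positivity

lemma two_mul_add_one_le (n : ℕ) : (2 * n + 1 : ℝ) ≤ 2 * 2 ^ n := by
  induction n with
  | zero => simp
  | succ n ih =>
    rw [pow_succ]
    push_cast
    have : (1 : ℝ) ≤ 2 ^ n := one_le_pow₀ (by norm_num)
    linarith

/-- Polynomial growth of degree two is absorbed by a quarter of the exponential decay. -/
lemma sq_mul_pow_le (n : ℕ) : (2 * n + 1 : ℝ) ^ 2 * (1/1024) ^ n ≤ 4 * (1/256) ^ n := by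
  calc (2 * n + 1 : ℝ) ^ 2 * (1/1024) ^ n ≤ (2 * 2 ^ n) ^ 2 * (1/1024) ^ n := by
        gcongr; exact two_mul_add_one_le n
    _ = 4 * (1/256) ^ n := by
        rw [mul_pow, ← pow_mul, mul_comm n 2, pow_mul, mul_assoc, ← mul_pow]; norm_num

lemma abs_wzG_le (n k : ℕ) :
    |wzG n k| ≤ |wzH n k| * (256 * (2 * n + k + 1) ^ 2) := by
  unfold wzG
  rw [mul_div_assoc, abs_mul, abs_div]
  gcongr
  rw [abs_of_nonneg (a := (2 * n + k + 1 : ℝ) ^ 4) (by positivity), div_le_iff₀ (by positivity)]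
  refine (abs_wzP_le n k).trans (le_of_eq (by ring))

lemma abs_wzG_zero_le (n : ℕ) : |wzG n 0| ≤ 1024 * (1/256) ^ n := by
  refine (abs_wzG_le n 0).trans ?_
  have h := mul_le_mul_of_nonneg_right (abs_wzH_zero_le n)
    (show (0 : ℝ) ≤ 256 * (2 * n + 1) ^ 2 by positivity)
  have := sq_mul_pow_le n
  push_cast
  rw [add_zero]
  linarith

lemma abs_wzG_le_inv (n k : ℕ) (hn : 1 ≤ n) : |wzG n k| ≤ 1024 / (k + 1) ^ 2 := by
  refine (abs_wzG_le n k).trans ?_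
  have h1 := abs_wzH_le n k hn
  have h2 : (2 * n + k + 1 : ℝ) ^ 2 ≤ ((2 * n + 1) * (k + 1)) ^ 2 := by
    gcongr
    have : (0 : ℝ) ≤ n * k := by positivity
    nlinarith
  have h3 : (1/256 : ℝ) ^ n ≤ 1 := pow_le_one₀ (by norm_num) (by norm_num)
  calc |wzH n k| * (256 * (2 * n + k + 1) ^ 2)
      ≤ ((1/1024) ^ n / (k + 1) ^ 4) * (256 * ((2 * n + 1) * (k + 1)) ^ 2) := by gcongr
    _ = 256 * ((2 * n + 1 : ℝ) ^ 2 * (1/1024) ^ n) / (k + 1) ^ 2 := by field_simp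
    _ ≤ 256 * (4 * 1) / (k + 1) ^ 2 := by
        have h4 : (2 * n + 1 : ℝ) ^ 2 * (1/1024) ^ n ≤ 4 * 1 :=
          (sq_mul_pow_le n).trans (by linarith)
        exact div_le_div_of_nonneg_right (by linarith) (by positivity)
    _ = 1024 / (k + 1) ^ 2 := by norm_num

lemma abs_wzF_le (n k : ℕ) (hn : 1 ≤ n) : |wzF n k| ≤ 1024 * (1/256) ^ n := by
  unfold wzF
  have h1 := abs_wzH_le n k hn
  have h2 : (128 * n * (1 + 6 * n + 4 * k) : ℝ) ≤ 256 * (2 * n + 1) ^ 2 * (k + 1) ^ 4 := by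
    rw [← sub_nonneg]
    ring_nf
    positivity
  rw [abs_mul, abs_of_nonneg (a := (128 * n * (1 + 6 * n + 4 * k) : ℝ)) (by positivity)]
  calc _ ≤ 256 * (2 * n + 1 : ℝ) ^ 2 * (k + 1) ^ 4 * ((1/1024) ^ n / (k + 1) ^ 4) := by gcongr
    _ = 256 * ((2 * n + 1 : ℝ) ^ 2 * (1/1024) ^ n) := by field_simp
    _ ≤ 256 * (4 * (1/256) ^ n) := by linarith [sq_mul_pow_le n]
    _ = _ := by ring

/-- The main term, evaluated through Euler's limit formula for `Γ(1/2) = √π`. -/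
lemma tendsto_wzG_zero_left :
    Tendsto (fun k : ℕ => wzG 0 k) atTop (𝓝 (128 / Real.pi ^ 2)) := by
  have hG := Real.GammaSeq_tendsto_Gamma (1/2)
  rw [Real.Gamma_one_half_eq] at hG
  have hG4 := (hG.pow 4).inv₀ (by positivity)
  have hpi : (√Real.pi ^ 4)⁻¹ = (Real.pi ^ 2)⁻¹ := by
    rw [show (4 : ℕ) = 2 * 2 by norm_num, pow_mul, Real.sq_sqrt Real.pi_pos.le]
  rw [hpi] at hG4
  -- The rational factor, written in the variable `x = 1/k`.
  let f : ℝ → ℝ := fun x =>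
    (128 + 576 * x + 1040 * x^2 + 960 * x^3 + 480 * x^4 + 124 * x^5 + 13 * x^6) /
      ((1 + x/2) ^ 4 * (1 + x) ^ 4)
  have hf : ContinuousAt f 0 := by
    refine ContinuousAt.div (by fun_prop) (by fun_prop) (by norm_num)
  have hf0 : f 0 = 128 := by simp [f]
  have hft : Tendsto (fun k : ℕ => f ((k : ℝ)⁻¹)) atTop (𝓝 128) := by
    rw [← hf0]
    exact hf.tendsto.comp tendsto_inv_atTop_nhds_zero_nat
  have hmul := hft.mul hG4
  rw [← div_eq_mul_inv] at hmul
  refine hmul.congr' ?_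
  filter_upwards [eventually_gt_atTop 0] with k hk
  have hk' : (0 : ℝ) < k := by exact_mod_cast hk
  have hprod : ∏ j ∈ range (k + 1), ((1/2 : ℝ) + j) = poch (1/2) k * (1/2 + k) := poch_succ _ _
  have hs : ((k : ℝ) ^ (1/2 : ℝ)) ^ 4 = k ^ 2 := by
    rw [← Real.sqrt_eq_rpow, show (4 : ℕ) = 2 * 2 by norm_num, pow_mul, Real.sq_sqrt hk'.le]
  have h1 : (k.factorial : ℝ) ≠ 0 := by positivity
  have h2 := (poch_half_pos k).ne'
  simp only [Real.GammaSeq, hprod, div_pow, mul_pow, hs, f, wzG, wzH, wzP]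
  rw [zero_add, mul_zero, zero_add]
  have h3 : (1/2 + (k : ℝ)) ≠ 0 := by positivity
  have h4 : poch (1/2) 0 = 1 := by simp [poch]
  rw [h4]
  push_cast
  rw [show (1 + (k : ℝ)⁻¹ / 2) = (1/2 + k) / k by field_simp; ring]
  rw [show (1 + (k : ℝ)⁻¹) = (k + 1) / k by field_simp]
  generalize poch (1/2) k = X at *
  simp only [Nat.factorial_zero, Nat.cast_one]
  generalize (1/2 + (k : ℝ)) = Y at *
  field_simp
  ring

theorem guillera_rate_1024 :
    HasSum
      (fun k : ℕ =>
        (-1/1024 : ℝ) ^ k * (poch (1/2) k) ^ 5 / (poch 1 k) ^ 5 *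
          (820 * (k : ℝ) ^ 2 + 180 * k + 13))
      (128 / Real.pi ^ 2) := by
  have hsumm : Summable (fun n => wzG n 0) := by
    refine Summable.of_norm_bounded (g := fun n : ℕ => 1024 * (1/256 : ℝ) ^ n)
      ((summable_geometric_of_lt_one (by norm_num) (by norm_num)).mul_left _) ?_
    intro n
    simpa using abs_wzG_zero_le n
  have hlim : Tendsto (fun N => ∑ n ∈ range N, wzG n 0) atTop (𝓝 (128 / Real.pi ^ 2)) := by
    -- Sum the WZ identity over the square `n, k ≤ N` and isolate the main term `G(0, N + 1)`.
    rw [← tendsto_add_atTop_iff_nat 1]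
    have hmain := tendsto_wzG_zero_left.comp (tendsto_add_atTop_nat 1)
    have herr : Tendsto (fun N : ℕ => ∑ n ∈ range N, wzG (n + 1) (N + 1)
        - ∑ k ∈ range (N + 1), wzF (N + 1) k) atTop (𝓝 0) := by
      have hb1 : Tendsto (fun N : ℕ => 1024 * (1 / ((N : ℝ) + 1))) atTop (𝓝 0) := by
        simpa using tendsto_one_div_add_atTop_nhds_zero_nat.const_mul (1024 : ℝ)
      have hb2 : Tendsto (fun N : ℕ => 1024 * (((N + 1 : ℕ) : ℝ) * (1/256) ^ (N + 1)))
          atTop (𝓝 0) := by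
        have := (tendsto_self_mul_const_pow_of_lt_one (r := (1/256 : ℝ)) (by norm_num)
          (by norm_num)).comp (tendsto_add_atTop_nat 1)
        simpa using this.const_mul (1024 : ℝ)
      have e1 : Tendsto (fun N : ℕ => ∑ n ∈ range N, wzG (n + 1) (N + 1)) atTop (𝓝 0) := by
        refine squeeze_zero_norm (fun N => ?_) hb1
        refine (norm_sum_le _ _).trans ?_
        refine (sum_le_card_nsmul _ _ _ fun n _ =>
          abs_wzG_le_inv (n + 1) (N + 1) (by omega)).trans ?_
        rw [card_range, nsmul_eq_mul, mul_div_assoc', mul_one_div,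
          div_le_div_iff₀ (by positivity) (by positivity), ← sub_nonneg]
        push_cast
        ring_nf
        positivity
      have e2 : Tendsto (fun N : ℕ => ∑ k ∈ range (N + 1), wzF (N + 1) k) atTop (𝓝 0) := by
        refine squeeze_zero_norm (fun N => ?_) hb2
        refine (norm_sum_le _ _).trans ?_
        refine (sum_le_card_nsmul _ _ _ fun k _ => abs_wzF_le (N + 1) k (by omega)).trans ?_
        rw [card_range, nsmul_eq_mul]
        exact le_of_eq (by ring)
      simpa using e1.sub e2
    have := hmain.add herr
    rw [add_zero] at this
    refine this.congr fun N => ?_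
    rw [wz_sum (N + 1) (N + 1), sum_range_succ' (fun n => wzG n (N + 1)) N]
    simp only [Function.comp]
    ring
  have hfun : (fun k : ℕ =>
        (-1/1024 : ℝ) ^ k * (poch (1/2) k) ^ 5 / (poch 1 k) ^ 5 *
          (820 * (k : ℝ) ^ 2 + 180 * k + 13)) = fun n => wzG n 0 :=
    funext fun n => (wzG_zero_right n).symm
  rw [hfun]
  exact (hsumm.hasSum_iff_tendsto_nat).2 hlim
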